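/- The space C_k(ℚ) of continuous real-valued functions on the rational numbers (with the subspace topology inherited from ℝ) equipped with the compact-open topology is not productively countably tight. -/

import Mathlib

open Set Topology

universe u

/-- A bornology on `X`: a collection of subsets covering `X`, closed under
taking subsets and under finite unions. -/
structure IsBornology {X : Type*} (𝔅 : Set (Set X)) : Prop where
  covers : ⋃₀ 𝔅 = Set.univ
  empty_mem : ∅ ∈ 𝔅
  subset_mem : ∀ ⦃A B : Set X⦄, B ∈ 𝔅 → A ⊆ B → A ∈ 𝔅
  union_mem : ∀ ⦃A B : Set X⦄, A ∈ 𝔅 → B ∈ 𝔅 → A ∪ B ∈ 𝔅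

/-- `𝔅` has a compact base: every member of `𝔅` is contained in a compact member of `𝔅`. -/
def HasCompactBase {X : Type*} [TopologicalSpace X] (𝔅 : Set (Set X)) : Prop :=
  ∀ B ∈ 𝔅, ∃ K ∈ 𝔅, IsCompact K ∧ B ⊆ K

/-- The set of continuous real-valued functions on `X` (as a bare type, to be
topologized by a bornology). -/
def CFn (X : Type u) [TopologicalSpace X] : Type u := {f : X → ℝ // Continuous f}

/-- The zero function as an element of `CFn X`. -/
def zeroFn (X : Type u) [TopologicalSpace X] : CFn X := ⟨fun _ => 0, continuous_const⟩

/-- The basic "ball" `⟨B, ε⟩[f] = {g : ∀ x ∈ B, |f x − g x| < ε}`. -/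
def unifBall {X : Type u} [TopologicalSpace X] (f : CFn X) (B : Set X) (ε : ℝ) :
    Set (CFn X) :=
  {g | ∀ x ∈ B, |f.1 x - g.1 x| < ε}

/-- The topology of uniform convergence on members of a bornology `𝔅`:
a set is open iff around each of its points it contains a basic ball
`⟨B, ε⟩[f]` with `B ∈ 𝔅`, `ε > 0`.  This makes `CFn X` into `C_𝔅(X)`. -/
def bornTopology {X : Type u} [TopologicalSpace X] (𝔅 : Set (Set X))
    (hB : IsBornology 𝔅) : TopologicalSpace (CFn X) where
  IsOpen U := ∀ f ∈ U, ∃ B ∈ 𝔅, ∃ ε > (0 : ℝ), unifBall f B ε ⊆ U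
  isOpen_univ := fun f _ => ⟨∅, hB.empty_mem, 1, one_pos, fun _ _ => trivial⟩
  isOpen_inter := by
    intro U V hU hV f hf
    obtain ⟨B₁, hB₁, ε₁, hε₁, h₁⟩ := hU f hf.1
    obtain ⟨B₂, hB₂, ε₂, hε₂, h₂⟩ := hV f hf.2
    refine ⟨B₁ ∪ B₂, hB.union_mem hB₁ hB₂, min ε₁ ε₂, lt_min hε₁ hε₂, fun g hg => ⟨?_, ?_⟩⟩
    · exact h₁ fun x hx => lt_of_lt_of_le (hg x (Or.inl hx)) (min_le_left _ _)
    · exact h₂ fun x hx => lt_of_lt_of_le (hg x (Or.inr hx)) (min_le_right _ _)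
  isOpen_sUnion := by
    intro S hS f hf
    obtain ⟨U, hU, hfU⟩ := hf
    obtain ⟨B, hB', ε, hε, h⟩ := hS U hU f hfU
    exact ⟨B, hB', ε, hε, h.trans (Set.subset_sUnion_of_mem hU)⟩

/-- `Ω_z`: the family of all subsets of `Z ∖ {z}` having `z` in their closure. -/
def OmegaAt {Z : Type*} [TopologicalSpace Z] (z : Z) : Set (Set Z) :=
  {A | A ⊆ {z}ᶜ ∧ z ∈ closure A}

/-- `𝒢` is a `𝔅`-cover of `X`: every member of `𝔅` is contained in a member of `𝒢`. -/
def IsBCover {X : Type*} (𝔅 : Set (Set X)) (𝒢 : Set (Set X)) : Prop :=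
  ∀ B ∈ 𝔅, ∃ G ∈ 𝒢, B ⊆ G

/-- `𝒪_𝔅`: the family of all open `𝔅`-covers of `X`. -/
def OpenBCovers {X : Type*} [TopologicalSpace X] (𝔅 : Set (Set X)) : Set (Set (Set X)) :=
  {𝒰 | (∀ U ∈ 𝒰, IsOpen U) ∧ IsBCover 𝔅 𝒰}

/-- `𝒢` is a K-cover of `X`: every compact subset of `X` is contained in a member of `𝒢`. -/
def IsKCover {X : Type*} [TopologicalSpace X] (𝒢 : Set (Set X)) : Prop :=
  ∀ K : Set X, IsCompact K → ∃ G ∈ 𝒢, K ⊆ G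

/-- `𝒦`: the family of all open K-covers of `X`. -/
def KCovers (X : Type*) [TopologicalSpace X] : Set (Set (Set X)) :=
  {𝒰 | (∀ U ∈ 𝒰, IsOpen U) ∧ IsKCover 𝒰}

/-- Player II has a winning strategy in the game `G₁(𝒜, 𝒞)` (of length `ω`):
a function assigning to each finite sequence `(A₀, …, Aₙ)` of moves of player I an
element of `Aₙ`, such that in any play following it the chosen points form a member of `𝒞`. -/
def G1WinII {T : Type*} (𝒜 𝒞 : Set (Set T)) : Prop :=
  ∃ σ : (n : ℕ) → (Fin (n + 1) → Set T) → T,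
    (∀ (n : ℕ) (h : Fin (n + 1) → Set T), (∀ i, h i ∈ 𝒜) → σ n h ∈ h (Fin.last n)) ∧
    ∀ A : ℕ → Set T, (∀ n, A n ∈ 𝒜) →
      (Set.range fun n => σ n fun i => A i.1) ∈ 𝒞

/-- Player II has a winning strategy in the transfinite game `G₁^α(𝒜, 𝒞)` of length `α`. -/
def G1WinIIOrd {T : Type*} (α : Ordinal.{0}) (𝒜 𝒞 : Set (Set T)) : Prop :=
  ∃ σ : (γ : {γ : Ordinal.{0} // γ < α}) → ({δ : Ordinal.{0} // δ ≤ γ.1} → Set T) → T,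
    (∀ (γ : {γ : Ordinal.{0} // γ < α}) (h : {δ : Ordinal.{0} // δ ≤ γ.1} → Set T),
      (∀ δ, h δ ∈ 𝒜) → σ γ h ∈ h ⟨γ.1, le_rfl⟩) ∧
    ∀ A : {γ : Ordinal.{0} // γ < α} → Set T, (∀ γ, A γ ∈ 𝒜) →
      (Set.range fun γ : {γ : Ordinal.{0} // γ < α} =>
        σ γ fun δ => A ⟨δ.1, lt_of_le_of_lt δ.2 γ.2⟩) ∈ 𝒞

/-- The selection principle `S₁(𝒜, 𝒞)`. -/
def S1 {T : Type*} (𝒜 𝒞 : Set (Set T)) : Prop :=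
  ∀ A : ℕ → Set T, (∀ n, A n ∈ 𝒜) →
    ∃ a : ℕ → T, (∀ n, a n ∈ A n) ∧ Set.range a ∈ 𝒞

/-- `Z` has countable tightness. -/
def CountablyTight (Z : Type*) [TopologicalSpace Z] : Prop :=
  ∀ (z : Z) (A : Set Z), z ∈ closure A → ∃ B ⊆ A, B.Countable ∧ z ∈ closure B

/-- `Z` is productively countably tight: `Z × Y` has countable tightness
for every countably tight space `Y`. -/
def ProductivelyCountablyTight (Z : Type u) [TopologicalSpace Z] : Prop :=
  ∀ (Y : Type u) [TopologicalSpace Y], CountablyTight Y → CountablyTight (Z × Y)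

/-- `Z` has tightness at most `κ`. -/
def TightnessLE (Z : Type u) [TopologicalSpace Z] (κ : Cardinal.{u}) : Prop :=
  ∀ (z : Z) (A : Set Z), z ∈ closure A → ∃ B ⊆ A, Cardinal.mk B ≤ κ ∧ z ∈ closure B

/-- `κ ∈ Sp(Z)`: for every space `Y` of tightness at most `κ`, the product `Z × Y`
has tightness at most `κ`. -/
def MemSp (Z : Type u) [TopologicalSpace Z] (κ : Cardinal.{u}) : Prop :=
  ∀ (Y : Type u) [TopologicalSpace Y], TightnessLE Y κ → TightnessLE (Z × Y) κ

/-- `G` is a `G_κ`-set: an intersection of at most `κ` open sets. -/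
def IsGKappaSet {X : Type u} [TopologicalSpace X] (κ : Cardinal.{u}) (G : Set X) : Prop :=
  ∃ 𝒪 : Set (Set X), (∀ O ∈ 𝒪, IsOpen O) ∧ Cardinal.mk 𝒪 ≤ κ ∧ G = ⋂₀ 𝒪

/-- `G` is a `G_δ`-set: an intersection of countably many open sets. -/
def IsGDeltaSet {X : Type*} [TopologicalSpace X] (G : Set X) : Prop :=
  ∃ 𝒪 : Set (Set X), (∀ O ∈ 𝒪, IsOpen O) ∧ 𝒪.Countable ∧ G = ⋂₀ 𝒪

/-- A family `ℙ` of collections of subsets of `Z` is `κ`-singular at `z`. -/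
def KappaSingularAt {Z : Type u} [TopologicalSpace Z] (κ : Cardinal.{u})
    (ℙ : Set (Set (Set Z))) (z : Z) : Prop :=
  (∀ ξ ∈ ℙ, ∀ A ∈ ξ, Cardinal.mk A ≤ κ) ∧
  (∀ ξ ∈ ℙ, ∀ F : Finset (Set Z), ↑F ⊆ ξ → (⋂₀ (F : Set (Set Z))).Nonempty) ∧
  (∀ O : Set Z, IsOpen O → z ∈ O → ∃ ξ ∈ ℙ, ∃ A ∈ ξ, A ⊆ O) ∧
  (∀ ℰ ⊆ ℙ, Cardinal.mk ℰ ≤ κ → ∃ c : Set (Set Z) → Set Z,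
    (∀ ξ ∈ ℰ, c ξ ∈ ξ) ∧ z ∉ closure (⋃ ξ ∈ ℰ, c ξ))

/-- `X` is an Alster space. -/
def Alster (X : Type*) [TopologicalSpace X] : Prop :=
  ∀ 𝒢 : Set (Set X), (∀ G ∈ 𝒢, IsGDeltaSet G) → IsKCover 𝒢 →
    ∃ 𝒢' ⊆ 𝒢, 𝒢'.Countable ∧ ⋃₀ 𝒢' = Set.univ

/-- `X` is strongly Alster. -/
def StronglyAlster (X : Type*) [TopologicalSpace X] : Prop :=
  ∀ 𝒢 : Set (Set X), (∀ G ∈ 𝒢, IsGDeltaSet G) → IsKCover 𝒢 →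
    ∃ 𝒢' ⊆ 𝒢, 𝒢'.Countable ∧ IsKCover 𝒢'

/-- `X` is productively Lindelöf. -/
def ProductivelyLindelof (X : Type u) [TopologicalSpace X] : Prop :=
  ∀ (Y : Type u) [TopologicalSpace Y], LindelofSpace Y → LindelofSpace (X × Y)

/-- `X` is hemicompact. -/
def Hemicompact (X : Type*) [TopologicalSpace X] : Prop :=
  ∃ K : ℕ → Set X, (∀ n, IsCompact (K n)) ∧ ∀ C : Set X, IsCompact C → ∃ n, C ⊆ K n

/-!
Let `X` be completely regular and let `𝒢` be a `K`-cover of `X` by `G_δ`-sets. For each compact `K`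
pick `G_K ∈ 𝒢` containing `K`, and continuous functions `f_{K,0}, f_{K,1}, …` vanishing on `K` that
are eventually at least `1` at each point off `G_K`. In the product of `C_k(X)` with the sequential
fan whose spines are indexed by the compact sets, `(0, apex)` lies in the closure of the points
`(f_{K,n}, (K, n))`. Countable tightness of the product puts it in the closure of those with `K` in
a countable family `J`. Testing against the neighbourhood `{g | g < 1 on C}` of `0`, for `C`
compact, then gives `C ⊆ G_K` for some `K ∈ J`, so the `G_K` with `K ∈ J` form a countable
`K`-cover. In `ℚ` compact sets are `G_δ`, so being strongly Alster would make `ℚ` hemicompact,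
which it is not.
-/

open Filter TopologicalSpace

theorem prodMk_mem_closure_iff {Z Y : Type*} [TopologicalSpace Z] [TopologicalSpace Y] {z : Z}
    {y : Y} {S : Set (Z × Y)} :
    (z, y) ∈ closure S ↔ ∀ V ∈ 𝓝 z, y ∈ closure (Prod.snd '' (S ∩ Prod.fst ⁻¹' V)) := by
  simp only [mem_closure_iff_nhds, mem_nhds_prod_iff]
  constructor
  · intro h V hV U hU
    obtain ⟨p, ⟨hpV, hpU⟩, hpS⟩ := h (V ×ˢ U) ⟨V, hV, U, hU, Subset.rfl⟩
    exact ⟨p.2, hpU, p, ⟨hpS, hpV⟩, rfl⟩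
  · rintro h W ⟨V, hV, U, hU, hVU⟩
    obtain ⟨_, hpU, p, ⟨hpS, hpV⟩, rfl⟩ := h V hV U hU
    exact ⟨p, hVU ⟨hpV, hpU⟩, hpS⟩

/-- The sequential fan with spines indexed by `ι`: countably many isolated points on each spine
converge to the common point `apex`, whose neighbourhoods contain a tail of every spine, with no
uniformity across spines. -/
inductive SequentialFan (ι : Type u) : Type u
  | apex : SequentialFan ι
  | pt (i : ι) (n : ℕ) : SequentialFan ι

namespace SequentialFan

variable {ι : Type u}

instance : TopologicalSpace (SequentialFan ι) :=
  nhdsAdjoint apex (⨆ i, map (pt i) atTop)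

theorem nhds_apex : 𝓝 (apex : SequentialFan ι) = pure apex ⊔ ⨆ i, map (pt i) atTop :=
  nhds_nhdsAdjoint_same _ _

theorem nhds_pt (i : ι) (n : ℕ) : 𝓝 (pt i n) = pure (pt i n) :=
  nhds_nhdsAdjoint_of_ne _ nofun

theorem apex_mem_closure_iff {A : Set (SequentialFan ι)} :
    apex ∈ closure A ↔ apex ∈ A ∨ ∃ i, ∃ᶠ n in atTop, pt i n ∈ A := by
  simp only [mem_closure_iff_frequently, nhds_apex, frequently_sup, frequently_pure,
    frequently_iSup, frequently_map]

theorem pt_mem_closure_iff {A : Set (SequentialFan ι)} {i : ι} {n : ℕ} :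
    pt i n ∈ closure A ↔ pt i n ∈ A := by
  rw [mem_closure_iff_frequently, nhds_pt, frequently_pure]

theorem countablyTight : CountablyTight (SequentialFan ι) := by
  intro y A hy
  have of_mem (h : y ∈ A) : ∃ B ⊆ A, B.Countable ∧ y ∈ closure B :=
    ⟨{y}, singleton_subset_iff.2 h, countable_singleton y, subset_closure rfl⟩
  cases y with
  | pt i n => exact of_mem (pt_mem_closure_iff.1 hy)
  | apex =>
    obtain hA | ⟨i, hi⟩ := apex_mem_closure_iff.1 hy
    · exact of_mem hA
    · refine ⟨A ∩ range (pt i), inter_subset_left, (countable_range _).mono inter_subset_right, ?_⟩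
      exact apex_mem_closure_iff.2 (.inr ⟨i, hi.mono fun n hn => ⟨hn, mem_range_self n⟩⟩)

theorem prodMk_apex_mem_closure_image_iff {Z : Type*} [TopologicalSpace Z] {z : Z}
    {f : ι → ℕ → Z} {D : Set (ι × ℕ)} :
    (z, apex) ∈ closure ((fun q : ι × ℕ => (f q.1 q.2, pt q.1 q.2)) '' D) ↔
      ∀ V ∈ 𝓝 z, ∃ i, ∃ᶠ n in atTop, (i, n) ∈ D ∧ f i n ∈ V := by
  simp [prodMk_mem_closure_iff, apex_mem_closure_iff]

end SequentialFan

theorem ProductivelyCountablyTight.exists_countable_frequently_mem {Z : Type u}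
    [TopologicalSpace Z] (hZ : ProductivelyCountablyTight Z) {ι : Type u} {z : Z} {f : ι → ℕ → Z}
    (hf : ∀ V ∈ 𝓝 z, ∃ i, ∃ᶠ n in atTop, f i n ∈ V) :
    ∃ J : Set ι, J.Countable ∧ ∀ V ∈ 𝓝 z, ∃ i ∈ J, ∃ᶠ n in atTop, f i n ∈ V := by
  let p : ι × ℕ → Z × SequentialFan ι := fun q => (f q.1 q.2, .pt q.1 q.2)
  have hp : p.Injective := by
    rintro ⟨i, n⟩ ⟨j, m⟩ h
    obtain ⟨rfl, rfl⟩ := SequentialFan.pt.inj (congrArg Prod.snd h)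
    rfl
  have hcl : (z, .apex) ∈ closure (p '' univ) :=
    SequentialFan.prodMk_apex_mem_closure_image_iff.2 (by simpa only [mem_univ, true_and] using hf)
  obtain ⟨B, hBp, hB, hzB⟩ := hZ _ SequentialFan.countablyTight _ _ hcl
  obtain ⟨D, -, rfl⟩ := subset_image_iff.1 hBp
  refine ⟨Prod.fst '' D, (countable_of_injective_of_countable_image hp.injOn hB).image _, ?_⟩
  intro V hV
  obtain ⟨i, hi⟩ := SequentialFan.prodMk_apex_mem_closure_image_iff.1 hzB V hV
  obtain ⟨n, hn, -⟩ := hi.exists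
  exact ⟨i, ⟨(i, n), hn, rfl⟩, hi.mono fun _ => And.right⟩

theorem exists_isCompact_forall_eqOn_mem_of_mem_nhds {X Y : Type*} [TopologicalSpace X]
    [TopologicalSpace Y] {f : C(X, Y)} {V : Set C(X, Y)} (hV : V ∈ 𝓝 f) :
    ∃ K, IsCompact K ∧ ∀ g : C(X, Y), EqOn g f K → g ∈ V := by
  let agree : Compacts X → Set C(X, Y) := fun K => {g | EqOn g f K}
  have hle : ⨅ K, 𝓟 (agree K) ≤ 𝓝 f := by
    refine tendsto_id'.1 (ContinuousMap.tendsto_nhds_compactOpen.2 fun K hK U _ hKU => ?_)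
    exact mem_iInf_of_mem (⟨K, hK⟩ : Compacts X) fun g hg => hKU.congr hg.symm
  have hdir : Directed (· ≥ ·) fun K => 𝓟 (agree K) := fun K L =>
    ⟨K ⊔ L, principal_mono.2 fun _ hg => hg.mono subset_union_left,
      principal_mono.2 fun _ hg => hg.mono subset_union_right⟩
  obtain ⟨K, hK⟩ := (mem_iInf_of_directed hdir V).1 (hle hV)
  exact ⟨K, K.isCompact, fun g hg => hK hg⟩

section CompletelyRegular

variable {X : Type*} [TopologicalSpace X] [CompletelyRegularSpace X]

-- Separate the images of `s` and `t` in the Stone–Čech compactification, which is normal.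
theorem exists_continuous_zero_one_of_isCompact_of_isClosed {s t : Set X} (hs : IsCompact s)
    (ht : IsClosed t) (hd : Disjoint s t) :
    ∃ f : C(X, ℝ), EqOn f 0 s ∧ EqOn f 1 t ∧ ∀ x, f x ∈ Icc (0 : ℝ) 1 := by
  obtain ⟨t', ht', rfl⟩ := isInducing_stoneCechUnit.isClosed_iff.1 ht
  obtain ⟨f, hf0, hf1, hf⟩ := exists_continuous_zero_one_of_isClosed
    (hs.image continuous_stoneCechUnit).isClosed ht' (disjoint_image_left.2 hd)
  exact ⟨f.comp ⟨stoneCechUnit, continuous_stoneCechUnit⟩, fun x hx => hf0 (mem_image_of_mem _ hx),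
    fun x hx => hf1 hx, fun x => hf _⟩

theorem exists_seq_eqOn_zero_eventually_one_le {K G : Set X} (hK : IsCompact K) (hG : IsGδ G)
    (hKG : K ⊆ G) :
    ∃ f : ℕ → C(X, ℝ), (∀ n, EqOn (f n) 0 K) ∧ ∀ x ∉ G, ∀ᶠ n in atTop, 1 ≤ f n x := by
  obtain ⟨O, hO, rfl⟩ := isGδ_iff_eq_iInter_nat.1 hG
  have hKO (m : ℕ) : Disjoint K (O m)ᶜ :=
    disjoint_compl_right_iff_subset.2 (hKG.trans (iInter_subset O m))
  choose φ hφ0 hφ1 hφ using fun m =>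
    exists_continuous_zero_one_of_isCompact_of_isClosed hK (hO m).isClosed_compl (hKO m)
  refine ⟨fun n => ∑ m ∈ Finset.range n, φ m, fun n x hx => ?_, fun x hx => ?_⟩
  · rw [ContinuousMap.sum_apply]
    exact Finset.sum_eq_zero fun m _ => hφ0 m hx
  · obtain ⟨m, hm⟩ : ∃ m, x ∉ O m := by simpa only [mem_iInter, not_forall] using hx
    filter_upwards [eventually_gt_atTop m] with n hmn
    calc
      1 = φ m x := (hφ1 m hm).symm
      _ ≤ ∑ k ∈ Finset.range n, φ k x :=
        Finset.single_le_sum (fun k _ => (hφ k x).1) (Finset.mem_range.2 hmn)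
      _ = (∑ k ∈ Finset.range n, φ k) x := (ContinuousMap.sum_apply _ _ x).symm

end CompletelyRegular

theorem StronglyAlster.hemicompact {X : Type*} [TopologicalSpace X] (hX : StronglyAlster X)
    (hδ : ∀ K : Set X, IsCompact K → IsGδ K) : Hemicompact X := by
  obtain ⟨𝒢, hsub, h𝒢, hcov⟩ := hX {K | IsCompact K} hδ fun K hK => ⟨K, hK, Subset.rfl⟩
  obtain ⟨G, hG, -⟩ := hcov ∅ isCompact_empty
  obtain ⟨K, rfl⟩ := h𝒢.exists_eq_range ⟨G, hG⟩
  refine ⟨K, fun n => hsub (mem_range_self n), fun C hC => ?_⟩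
  obtain ⟨_, ⟨n, rfl⟩, hCn⟩ := hcov C hC
  exact ⟨n, hCn⟩

theorem Hemicompact.isCountablyGenerated_cocompact {X : Type*} [TopologicalSpace X]
    (hX : Hemicompact X) : (cocompact X).IsCountablyGenerated := by
  obtain ⟨K, hK, hcov⟩ := hX
  have hbasis : (cocompact X).HasBasis (fun _ : ℕ => True) fun n => (K n)ᶜ :=
    hasBasis_cocompact.to_hasBasis
      (fun C hC => (hcov C hC).imp fun _ hCn => ⟨trivial, compl_subset_compl.2 hCn⟩)
      fun n _ => ⟨K n, hK n, Subset.rfl⟩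
  exact hbasis.isCountablyGenerated

theorem not_stronglyAlster_rat : ¬ StronglyAlster ℚ := fun h =>
  Rat.not_countably_generated_cocompact
    (h.hemicompact fun _ hK => hK.isClosed.isGδ).isCountablyGenerated_cocompact

theorem stmt17_general {X : Type u} [TopologicalSpace X] [CompletelyRegularSpace X]
    (hX : ¬ StronglyAlster X) : ¬ ProductivelyCountablyTight C(X, ℝ) := by
  refine fun hP => hX fun 𝒢 hδ hcov => ?_
  choose G hG hKG using fun K : Compacts X => hcov K K.isCompact
  choose f hf0 hf1 using fun K : Compacts X =>
    exists_seq_eqOn_zero_eventually_one_le K.isCompact (hδ _ (hG K)) (hKG K)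
  have hacc : ∀ V ∈ 𝓝 (0 : C(X, ℝ)), ∃ K, ∃ᶠ n in atTop, f K n ∈ V := fun V hV => by
    obtain ⟨K, hK, hKV⟩ := exists_isCompact_forall_eqOn_mem_of_mem_nhds hV
    exact ⟨⟨K, hK⟩, Frequently.of_forall fun n => hKV _ (hf0 ⟨K, hK⟩ n)⟩
  obtain ⟨J, hJ, hfJ⟩ := hP.exists_countable_frequently_mem hacc
  refine ⟨G '' J, image_subset_iff.2 fun K _ => hG K, hJ.image G, fun C hC => ?_⟩
  obtain ⟨K, hKJ, hfK⟩ := hfJ {g | MapsTo g C (Iio 1)}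
    (ContinuousMap.eventually_mapsTo hC isOpen_Iio fun _ _ => mem_Iio.2 zero_lt_one)
  refine ⟨G K, mem_image_of_mem G hKJ, fun x hx => by_contra fun hxG => ?_⟩
  obtain ⟨n, hlt, hle⟩ := (hfK.and_eventually (hf1 K x hxG)).exists
  exact (hlt hx).not_ge hle

/-- `C_k(ℚ)` is not productively countably tight. -/
theorem stmt17 : ¬ ProductivelyCountablyTight C(ℚ, ℝ) :=
  stmt17_general not_stronglyAlster_rat
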